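/- There exists a finite set G of unary constraints such that the binary constraint OR = [0,1,1] is T-constructible from G ∪ {Implies}, where Implies = (1,1,0,1). (Explicitly, G = {Δ_0, [1,−8], [49,24]} works, where Δ_0 = [1,0].) -/

import Mathlib

/-- A (complex-valued Boolean) constraint of arity `k`. -/
abbrev Constraint (k : ℕ) : Type := (Fin k → Bool) → ℂ

/-- The binary equality constraint `EQ = [1,0,1]`, as a two-argument function. -/
def EQc : Bool → Bool → ℂ := fun a b => if a = b then 1 else 0

/-- The binary disequality constraint `XOR = [0,1,0]`, as a two-argument function. -/
def XORc : Bool → Bool → ℂ := fun a b => if a = b then 0 else 1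

/-- The binary constraint `Implies = (1,1,0,1)`, as a two-argument function. -/
def IMPc : Bool → Bool → ℂ := fun a b => if a = true ∧ b = false then 0 else 1

/-- The unary constraint `[a, b]` (value `a` on input `0`, value `b` on input `1`). -/
def unC (a b : ℂ) : Constraint 1 := fun x => if x 0 then b else a

/-- The binary constraint `(a,b,c,d) = (f(0,0), f(0,1), f(1,0), f(1,1))`. -/
def binC (a b c d : ℂ) : Constraint 2 := fun x =>
  if x 0 then (if x 1 then d else c) else (if x 1 then b else a)

/-- `OR = [0,1,1]`. -/
def ORc : Constraint 2 := binC 0 1 1 1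

/-- `Implies = (1,1,0,1)` as a binary constraint. -/
def Impliesc : Constraint 2 := binC 1 1 0 1

/-- Membership in `NZ`: the constraint is everywhere nonzero. -/
def inNZ {k : ℕ} (f : Constraint k) : Prop := ∀ x, f x ≠ 0

/-- Membership in `DG`: the constraint is a product of unary constraints, one per variable. -/
def inDG {k : ℕ} (f : Constraint k) : Prop :=
  ∃ g : Fin k → Bool → ℂ, ∀ x, f x = ∏ i, g i (x i)

/-- Membership in `ED`: the constraint is a product of at least one factor, each factor
being a unary constraint applied to some variable, or `EQ`/`XOR` applied to two variables. -/
def inED {k : ℕ} (f : Constraint k) : Prop :=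
  ∃ (l1 l2 : ℕ) (h : Fin l1 → Bool → ℂ) (j : Fin l1 → Fin k)
    (g : Fin l2 → Bool → Bool → ℂ) (m n : Fin l2 → Fin k),
    1 ≤ l1 + l2 ∧ (∀ i, g i = EQc ∨ g i = XORc) ∧
    ∀ x, f x = (∏ i, h i (x (j i))) * ∏ i, g i (x (m i)) (x (n i))

/-- Membership in `IM`: `f ∉ NZ` and `f` is a product of at least one factor, each factor
being a unary constraint applied to some variable, or `Implies` applied to two variables. -/
def inIM {k : ℕ} (f : Constraint k) : Prop :=
  ¬ inNZ f ∧
  ∃ (l1 l2 : ℕ) (h : Fin l1 → Bool → ℂ) (j : Fin l1 → Fin k)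
    (m n : Fin l2 → Fin k),
    1 ≤ l1 + l2 ∧
    ∀ x, f x = (∏ i, h i (x (j i))) * ∏ i, IMPc (x (m i)) (x (n i))

/-- The underlying relation `R_f = {x : f x ≠ 0}` of a constraint `f`. -/
def relOf {k : ℕ} (f : Constraint k) : Set (Fin k → Bool) := {x | f x ≠ 0}

/-- Factors allowed in an IMP-style factorization of a relation:
`Δ_c(x_i)` or `Implies(x_i, x_j)`. -/
inductive ImpFactor (k : ℕ) where
  | delta (c : Bool) (i : Fin k)
  | imp (i j : Fin k)
deriving DecidableEq

/-- Evaluation of an IMP-factor at an assignment. -/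
def ImpFactor.eval {k : ℕ} : ImpFactor k → (Fin k → Bool) → Bool
  | .delta c i, x => x i == c
  | .imp i j, x => !(x i) || x j

/-- `L` is a factor list for the relation `R`: the conjunction of the factors in `L` equals `R`. -/
def isFactorListFor {k : ℕ} (L : List (ImpFactor k)) (R : Set (Fin k → Bool)) : Prop :=
  ∀ x, x ∈ R ↔ ∀ fac ∈ L, fac.eval x = true

/-- Membership in `IMP`: the relation is the conjunction of a positive number of factors of the
forms `Δ_0(x)`, `Δ_1(x)`, `Implies(x,y)`. -/
def inIMP {k : ℕ} (R : Set (Fin k → Bool)) : Prop :=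
  ∃ L : List (ImpFactor k), L ≠ [] ∧ isFactorListFor L R

/-- `f` has imp support when `R_f ∈ IMP`. -/
def hasImpSupport {k : ℕ} (f : Constraint k) : Prop := inIMP (relOf f)

/-- A factor list is imp-distinctive if no variable occurs both in a `Δ_c` factor and in an
`Implies` factor, and no factor `Implies(x,x)` occurs. -/
def impDistinctive {k : ℕ} (L : List (ImpFactor k)) : Prop :=
  (∀ i : Fin k, ¬ ((∃ c, ImpFactor.delta c i ∈ L) ∧
      (∃ j, ImpFactor.imp i j ∈ L ∨ ImpFactor.imp j i ∈ L))) ∧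
  (∀ i : Fin k, ImpFactor.imp i i ∉ L)

/-- Factors of the forms `Δ_c(x_i)` or `EQ(x_i,x_j)`. -/
inductive EqFactor (k : ℕ) where
  | delta (c : Bool) (i : Fin k)
  | eq (i j : Fin k)
deriving DecidableEq

/-- Evaluation of such a factor at an assignment. -/
def EqFactor.eval {k : ℕ} : EqFactor k → (Fin k → Bool) → Bool
  | .delta c i, x => x i == c
  | .eq i j, x => x i == x j

/-- `f` is in simple form: its representing Boolean matrix (rows indexed by `R_f`) has
no all-`0` column, no all-`1` column, and no two identical columns. -/
def simpleForm {k : ℕ} (f : Constraint k) : Prop :=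
  (∀ i : Fin k, ∃ a, f a ≠ 0 ∧ a i = true) ∧
  (∀ i : Fin k, ∃ a, f a ≠ 0 ∧ a i = false) ∧
  (∀ i j : Fin k, i ≠ j → ∃ a, f a ≠ 0 ∧ a i ≠ a j)

/-- A constraint of unspecified arity. -/
abbrev Ctr : Type := Σ k : ℕ, Constraint k

/-- T-constructibility of a constraint from a set `G` of constraints, by finitely many
applications of permutation, pinning, projection, linking, expansion, multiplication,
and normalization. -/
inductive TCon (G : Set Ctr) : Ctr → Prop where
  | base {c : Ctr} : c ∈ G → TCon G c
  | perm {k : ℕ} {g : Constraint k} (σ : Equiv.Perm (Fin k)) :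
      TCon G ⟨k, g⟩ → TCon G ⟨k, fun x => g (fun i => x (σ i))⟩
  | pinning {k : ℕ} {g : Constraint (k+1)} (i : Fin (k+1)) (c : Bool) :
      TCon G ⟨k+1, g⟩ → TCon G ⟨k, fun x => g (i.insertNth c x)⟩
  | proj {k : ℕ} {g : Constraint (k+1)} (i : Fin (k+1)) :
      TCon G ⟨k+1, g⟩ →
      TCon G ⟨k, fun x => g (i.insertNth false x) + g (i.insertNth true x)⟩
  | link {k : ℕ} {g : Constraint (k+1)} (i : Fin (k+1)) (j : Fin k) :
      TCon G ⟨k+1, g⟩ → TCon G ⟨k, fun x => g (i.insertNth (x j) x)⟩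
  | expand {k : ℕ} {g : Constraint k} (i : Fin (k+1)) :
      TCon G ⟨k, g⟩ → TCon G ⟨k+1, fun x => g (fun j => x (i.succAbove j))⟩
  | mul {k : ℕ} {g₁ g₂ : Constraint k} :
      TCon G ⟨k, g₁⟩ → TCon G ⟨k, g₂⟩ → TCon G ⟨k, fun x => g₁ x * g₂ x⟩
  | norm {k : ℕ} {g : Constraint k} (lam : ℂ) (hlam : lam ≠ 0) :
      TCon G ⟨k, g⟩ → TCon G ⟨k, fun x => lam * g x⟩

/-- T-constructibility using no projection operation. -/
inductive TConNoProj (G : Set Ctr) : Ctr → Prop where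
  | base {c : Ctr} : c ∈ G → TConNoProj G c
  | perm {k : ℕ} {g : Constraint k} (σ : Equiv.Perm (Fin k)) :
      TConNoProj G ⟨k, g⟩ → TConNoProj G ⟨k, fun x => g (fun i => x (σ i))⟩
  | pinning {k : ℕ} {g : Constraint (k+1)} (i : Fin (k+1)) (c : Bool) :
      TConNoProj G ⟨k+1, g⟩ → TConNoProj G ⟨k, fun x => g (i.insertNth c x)⟩
  | link {k : ℕ} {g : Constraint (k+1)} (i : Fin (k+1)) (j : Fin k) :
      TConNoProj G ⟨k+1, g⟩ → TConNoProj G ⟨k, fun x => g (i.insertNth (x j) x)⟩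
  | expand {k : ℕ} {g : Constraint k} (i : Fin (k+1)) :
      TConNoProj G ⟨k, g⟩ → TConNoProj G ⟨k+1, fun x => g (fun j => x (i.succAbove j))⟩
  | mul {k : ℕ} {g₁ g₂ : Constraint k} :
      TConNoProj G ⟨k, g₁⟩ → TConNoProj G ⟨k, g₂⟩ →
      TConNoProj G ⟨k, fun x => g₁ x * g₂ x⟩
  | norm {k : ℕ} {g : Constraint k} (lam : ℂ) (hlam : lam ≠ 0) :
      TConNoProj G ⟨k, g⟩ → TConNoProj G ⟨k, fun x => lam * g x⟩

/-- Pinning the `i`-th variable of `f` to the bit `c`. -/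
def pinC {k : ℕ} (f : Constraint (k+1)) (i : Fin (k+1)) (c : Bool) : Constraint k :=
  fun x => f (i.insertNth c x)

/-- `R_f` admits a good factor list: a factor list consisting only of `Implies` factors,
in which every variable is incident to at least one edge of the induced imp graph,
and whose imp graph has no (directed) cycle. -/
def hasGoodFactorList {k : ℕ} (f : Constraint k) : Prop :=
  ∃ L : List (ImpFactor k),
    isFactorListFor L (relOf f) ∧
    (∀ fac ∈ L, ∃ i j, fac = ImpFactor.imp i j) ∧
    (∀ i : Fin k, ∃ j, ImpFactor.imp i j ∈ L ∨ ImpFactor.imp j i ∈ L) ∧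
    ¬ ∃ i : Fin k, Relation.TransGen (fun a b => ImpFactor.imp a b ∈ L) i i

/-!
`OR(x₁, …, x_k) = ∑_z u(z) ∏ᵢ Implies(xᵢ, z)` with `u = [-1, 1]`: the term `z = 1` is always `1`,
and the term `z = 0` is `-1` if all `xᵢ` are `0` and vanishes otherwise.
-/

namespace TCon

variable {G : Set Ctr} {k n : ℕ}

theorem comp_bijective {g : Constraint k} (hg : TCon G ⟨k, g⟩) {e : Fin k → Fin n}
    (he : Function.Bijective e) : TCon G ⟨n, fun x => g (x ∘ e)⟩ := by
  obtain rfl : k = n := by simpa using Fintype.card_of_bijective he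
  exact hg.perm (Equiv.ofBijective e he)

theorem comp_injective {g : Constraint k} (hg : TCon G ⟨k, g⟩) {e : Fin k → Fin n}
    (he : Function.Injective e) : TCon G ⟨n, fun x => g (x ∘ e)⟩ := by
  induction n with
  | zero => exact hg.comp_bijective ⟨he, fun i => i.elim0⟩
  | succ n ih =>
    by_cases hsurj : Function.Surjective e
    · exact hg.comp_bijective ⟨he, hsurj⟩
    obtain ⟨i, hi⟩ : ∃ i, ∀ a, e a ≠ i := by simpa [Function.Surjective] using hsurj
    choose e' he' using fun a => Fin.exists_succAbove_eq (hi a)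
    obtain rfl : i.succAbove ∘ e' = e := funext he'
    exact (ih he.of_comp).expand i

theorem comp {g : Constraint k} (hg : TCon G ⟨k, g⟩) (e : Fin k → Fin n) :
    TCon G ⟨n, fun x => g (x ∘ e)⟩ := by
  induction k with
  | zero => exact hg.comp_injective (Function.injective_of_subsingleton e)
  | succ k ih =>
    by_cases he : Function.Injective e
    · exact hg.comp_injective he
    obtain ⟨i, j, hij, hne⟩ := Function.not_injective_iff.mp he
    obtain ⟨j, rfl⟩ := Fin.exists_succAbove_eq hne.symm
    have hinsert (x : Fin n → Bool) :
        i.insertNth (x (e (i.succAbove j))) (x ∘ e ∘ i.succAbove) = x ∘ e := by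
      rw [← hij]
      exact Fin.insertNth_self_removeNth i (x ∘ e)
    simpa only [Function.comp_apply, hinsert] using ih (hg.link i j) (e ∘ i.succAbove)

theorem mul_prod {ι : Type*} {g : Constraint k} (hg : TCon G ⟨k, g⟩) (s : Finset ι)
    {f : ι → Constraint k} (hf : ∀ i ∈ s, TCon G ⟨k, f i⟩) :
    TCon G ⟨k, fun x => g x * ∏ i ∈ s, f i x⟩ := by
  classical
  induction s using Finset.induction_on with
  | empty => simpa using hg
  | insert a s ha ih =>
    rw [Finset.forall_mem_insert] at hf
    simpa only [Finset.prod_insert ha, mul_left_comm] using hf.1.mul (ih hf.2)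

theorem sum_snoc {g : Constraint (k + 1)} (hg : TCon G ⟨k + 1, g⟩) :
    TCon G ⟨k, fun x => ∑ z, g (Fin.snoc x z)⟩ := by
  simpa only [Fintype.sum_bool, add_comm, Fin.insertNth_last'] using hg.proj (Fin.last k)

theorem sum_mul_prod {u : Constraint 1} (hu : TCon G ⟨1, u⟩) {f : Fin k → Constraint 2}
    (hf : ∀ i, TCon G ⟨2, f i⟩) :
    TCon G ⟨k, fun x => ∑ z, u ![z] * ∏ i, f i ![x i, z]⟩ := by
  have hcenter := hu.comp ![Fin.last k]
  have hedge (i : Fin k) := (hf i).comp ![i.castSucc, Fin.last k]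
  have snoc_center (x : Fin k → Bool) (z : Bool) :
      (Fin.snoc x z : Fin (k + 1) → Bool) ∘ ![Fin.last k] = ![z] := by
    ext a; fin_cases a; simp
  have snoc_edge (x : Fin k → Bool) (z : Bool) (i : Fin k) :
      (Fin.snoc x z : Fin (k + 1) → Bool) ∘ ![i.castSucc, Fin.last k] = ![x i, z] := by
    ext a; fin_cases a <;> simp
  simpa only [snoc_center, snoc_edge] using
    (hcenter.mul_prod Finset.univ fun i _ => hedge i).sum_snoc

end TCon

/-- The `OR` constraint on `k` variables, extending the binary `OR` to every arity; `orC 0` is the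
constant `0`. -/
def orC (k : ℕ) : Constraint k := fun x => if ∃ i, x i = true then 1 else 0

theorem orC_two : orC 2 = ORc := by
  funext x
  cases h₀ : x 0 <;> cases h₁ : x 1 <;> simp [orC, ORc, binC, h₀, h₁]

theorem prod_Impliesc_true {k : ℕ} (x : Fin k → Bool) : ∏ i, Impliesc ![x i, true] = 1 := by
  simp [Impliesc, binC]

theorem prod_Impliesc_false {k : ℕ} (x : Fin k → Bool) :
    ∏ i, Impliesc ![x i, false] = 1 - orC k x := by
  have himp (b : Bool) : Impliesc ![b, false] = if b = false then 1 else 0 := by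
    cases b <;> simp [Impliesc, binC]
  have hprod : ∏ i, Impliesc ![x i, false] = if ∀ i, x i = false then 1 else 0 := by
    simp [himp, Finset.prod_ite_zero]
  rw [hprod, orC]
  by_cases hx : ∃ i, x i = true <;> simp_all

theorem orC_eq_sum_prod_Impliesc {k : ℕ} (x : Fin k → Bool) :
    orC k x = ∑ z, unC (-1) 1 ![z] * ∏ i, Impliesc ![x i, z] := by
  simp [prod_Impliesc_true, prod_Impliesc_false, unC]

theorem tCon_orC {G : Set Ctr} (hu : TCon G ⟨1, unC (-1) 1⟩) (himp : TCon G ⟨2, Impliesc⟩)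
    (k : ℕ) : TCon G ⟨k, orC k⟩ := by
  simpa only [← orC_eq_sum_prod_Impliesc] using hu.sum_mul_prod fun _ : Fin k => himp

theorem stmt6_general : ∃ G : Set Ctr, G.Finite ∧ (∀ c ∈ G, c.1 = 1) ∧
    ∀ k, TCon (G ∪ {⟨2, Impliesc⟩}) ⟨k, orC k⟩ :=
  ⟨{⟨1, unC (-1) 1⟩}, Set.finite_singleton _, by simp,
    tCon_orC (.base (.inl rfl)) (.base (.inr rfl))⟩

/-- There exists a finite set `G` of unary constraints such that
`OR = [0,1,1]` is T-constructible from `G ∪ {Implies}`. -/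
theorem stmt6 : ∃ G : Set Ctr, G.Finite ∧ (∀ c ∈ G, c.1 = 1) ∧
    TCon (G ∪ {⟨2, Impliesc⟩}) ⟨2, ORc⟩ := by
  obtain ⟨G, hfin, hunary, hor⟩ := stmt6_general
  exact ⟨G, hfin, hunary, orC_two ▸ hor 2⟩
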